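/- Let β > 0, Δt > 0, and σ ∈ ℝ with |σ| ≤ 1. Let aⁿ < bⁿ, let hⁿ : [aⁿ, bⁿ] → ℝ be continuously differentiable with hⁿ(aⁿ) = hⁿ(bⁿ) = 0, and let pₙ, qₙ ∈ ℝ. Define aⁿ⁺¹ = aⁿ + Δt·(σ + 1/√(1 + pₙ²)) and bⁿ⁺¹ = bⁿ − Δt·(σ + 1/√(1 + qₙ²)), and assume aⁿ⁺¹ < bⁿ⁺¹. Define the rescaled profile hⁿ*(x) = hⁿ( aⁿ + (bⁿ − aⁿ)·(x − aⁿ⁺¹)/(bⁿ⁺¹ − aⁿ⁺¹) ) for x ∈ [aⁿ⁺¹, bⁿ⁺¹]. Let h̃ⁿ⁺¹ : [aⁿ⁺¹, bⁿ⁺¹] → ℝ be continuously differentiable with zero boundary values and satisfying, for every Lipschitz v with zero boundary values, ∫ [ (β/Δt)·(h̃ⁿ⁺¹ − hⁿ*)·v/√(1 + (h̃ⁿ⁺¹′)²) + (h̃ⁿ⁺¹′ + hⁿ*′)·v′/(√(1 + (h̃ⁿ⁺¹′)²) + √(1 + (hⁿ*′)²)) ] dx = 0. Set hⁿ⁺¹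 = max{h̃ⁿ⁺¹, 0}. Then (β/Δt)·∫_{aⁿ⁺¹}^{bⁿ⁺¹} (h̃ⁿ⁺¹ − hⁿ*)²/√(1 + (h̃ⁿ⁺¹′)²) dx + ∫_{aⁿ⁺¹}^{bⁿ⁺¹} √(1 + ((hⁿ⁺¹)′)²) dx ≤ ∫_{aⁿ}^{bⁿ} √(1 + ((hⁿ)′)²) dx + 4·Δt, where (hⁿ⁺¹)′ is the almost-everywhere derivative of the Lipschitz function hⁿ⁺¹. -/

import Mathlib

/-!
Testing the weak form with the increment `v = h̃ⁿ⁺¹ - hⁿ*` turns its second term into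
`(p + q)(p - q) / (√(1 + p²) + √(1 + q²)) = √(1 + p²) - √(1 + q²)`, so the dissipation is exactly
the length lost from `hⁿ*` to `h̃ⁿ⁺¹`. The projection is a 1-Lipschitz postcomposition, hence does
not lengthen the graph, and the affine rescaling lengthens it by at most the growth of the wetted
interval, which the contact point update bounds by `2Δt`.
-/

open Set MeasureTheory intervalIntegral

theorem norm_deriv_comp_le_of_lipschitzWith {𝕜 E F : Type*} [NontriviallyNormedField 𝕜]
    [NormedAddCommGroup E] [NormedSpace 𝕜 E] [NormedAddCommGroup F] [NormedSpace 𝕜 F]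
    {P : E → F} {K : NNReal} (hP : LipschitzWith K P) {f : 𝕜 → E} {f' : E} {x : 𝕜}
    (hf : HasDerivAt f f' x) : ‖deriv (P ∘ f) x‖ ≤ K * ‖f'‖ := by
  by_cases hPf : DifferentiableAt 𝕜 (P ∘ f) x
  · refine le_of_tendsto_of_tendsto' hPf.hasDerivAt.tendsto_slope.norm
      (hf.tendsto_slope.norm.const_mul (K : ℝ)) fun y => ?_
    rw [slope_def_module, slope_def_module, norm_smul, norm_smul, mul_left_comm]
    exact mul_le_mul_of_nonneg_left (hP.norm_sub_le _ _) (norm_nonneg _)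
  · rw [deriv_zero_of_not_differentiableAt hPf, norm_zero]
    positivity

section ContinuousDeriv

variable {E : Type*} [NormedAddCommGroup E] [NormedSpace ℝ E]

/-- `f` is continuously differentiable on `s`, one-sidedly at boundary points, with derivative
`f'`. -/
structure HasContinuousDerivOn (f f' : ℝ → E) (s : Set ℝ) : Prop where
  hasDerivWithinAt : ∀ x ∈ s, HasDerivWithinAt f (f' x) s x
  continuousOn_deriv : ContinuousOn f' s

namespace HasContinuousDerivOn

variable {f f' g g' : ℝ → E} {s : Set ℝ} {a b x : ℝ}

theorem continuousOn (hf : HasContinuousDerivOn f f' s) : ContinuousOn f s :=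
  fun x hx => (hf.hasDerivWithinAt x hx).continuousWithinAt

theorem hasDerivAt_of_mem_Ioo (hf : HasContinuousDerivOn f f' (Icc a b)) (hx : x ∈ Ioo a b) :
    HasDerivAt f (f' x) x :=
  (hf.hasDerivWithinAt x (Ioo_subset_Icc_self hx)).hasDerivAt (Icc_mem_nhds hx.1 hx.2)

theorem sub (hf : HasContinuousDerivOn f f' s) (hg : HasContinuousDerivOn g g' s) :
    HasContinuousDerivOn (f - g) (f' - g') s where
  hasDerivWithinAt x hx := (hf.hasDerivWithinAt x hx).sub (hg.hasDerivWithinAt x hx)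
  continuousOn_deriv := hf.continuousOn_deriv.sub hg.continuousOn_deriv

theorem exists_lipschitzOnWith (hf : HasContinuousDerivOn f f' s) (hs : IsCompact s)
    (hconv : Convex ℝ s) : ∃ K, LipschitzOnWith K f s := by
  obtain ⟨C, hC⟩ := hs.exists_bound_of_continuousOn hf.continuousOn_deriv
  exact ⟨C.toNNReal, hconv.lipschitzOnWith_of_nnnorm_hasDerivWithin_le hf.hasDerivWithinAt
    fun x hx => NNReal.coe_le_coe.1 ((hC x hx).trans (Real.le_coe_toNNReal C))⟩

end HasContinuousDerivOn

end ContinuousDeriv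

section Rescaling

variable {a b c d : ℝ}

/-- The affine map carrying `[c, d]` onto `[a, b]`; precomposition with it transports a profile
from `[a, b]` to `[c, d]`. -/
noncomputable def rescale (a b c d x : ℝ) : ℝ := a + (b - a) * (x - c) / (d - c)

theorem rescale_left (a b c d : ℝ) : rescale a b c d c = a := by simp [rescale]

theorem rescale_right (a b : ℝ) (hcd : c ≠ d) : rescale a b c d d = b := by
  rw [rescale, mul_div_cancel_right₀ _ (sub_ne_zero.2 hcd.symm), add_sub_cancel]

theorem rescale_eq_mul_add (a b c d x : ℝ) :
    rescale a b c d x = (b - a) / (d - c) * x + (a - (b - a) / (d - c) * c) := by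
  rw [rescale]
  ring

theorem hasDerivAt_rescale (a b c d x : ℝ) :
    HasDerivAt (rescale a b c d) ((b - a) / (d - c)) x := by
  rw [funext (rescale_eq_mul_add a b c d)]
  exact (hasDerivAt_const_mul _).add_const _

theorem monotone_rescale (hab : a ≤ b) (hcd : c ≤ d) : Monotone (rescale a b c d) := by
  intro x y hxy
  have := sub_nonneg.2 hab
  have := sub_nonneg.2 hcd
  unfold rescale
  gcongr

theorem mapsTo_rescale (hab : a ≤ b) (hcd : c < d) :
    MapsTo (rescale a b c d) (Icc c d) (Icc a b) := by
  simpa only [rescale_left, rescale_right a b hcd.ne] using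
    (monotone_rescale hab hcd.le).mapsTo_Icc (a := c) (b := d)

theorem integral_comp_rescale {E : Type*} [NormedAddCommGroup E] [NormedSpace ℝ E]
    (F : ℝ → E) (a b : ℝ) (hcd : c ≠ d) :
    ((b - a) / (d - c)) • (∫ x in c..d, F (rescale a b c d x)) = ∫ x in a..b, F x := by
  simp only [rescale_eq_mul_add]
  rw [smul_integral_comp_mul_add, ← rescale_eq_mul_add, ← rescale_eq_mul_add, rescale_left,
    rescale_right a b hcd]

theorem continuousOn_comp_rescale {X : Type*} [TopologicalSpace X] {f : ℝ → X}
    (hf : ContinuousOn f (Icc a b)) (hab : a ≤ b) (hcd : c < d) :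
    ContinuousOn (fun x => f (rescale a b c d x)) (Icc c d) :=
  hf.comp (fun x _ => (hasDerivAt_rescale a b c d x).continuousAt.continuousWithinAt)
    (mapsTo_rescale hab hcd)

theorem HasContinuousDerivOn.comp_rescale {f f' : ℝ → ℝ}
    (hf : HasContinuousDerivOn f f' (Icc a b)) (hab : a ≤ b) (hcd : c < d) :
    HasContinuousDerivOn (fun x => f (rescale a b c d x))
      (fun x => f' (rescale a b c d x) * ((b - a) / (d - c))) (Icc c d) where
  hasDerivWithinAt x hx := (hf.hasDerivWithinAt _ (mapsTo_rescale hab hcd hx)).comp x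
    (hasDerivAt_rescale a b c d x).hasDerivWithinAt (mapsTo_rescale hab hcd)
  continuousOn_deriv :=
    (continuousOn_comp_rescale hf.continuousOn_deriv hab hcd).mul continuousOn_const

end Rescaling

section GraphLength

variable {a b c d : ℝ} {f' : ℝ → ℝ}

/-- The length over `[a, b]` of the graph of a function with derivative `f'`. It takes the
derivative rather than the function, so that one-sided derivatives at the endpoints and
almost-everywhere derivatives are both covered. -/
noncomputable def graphLength (f' : ℝ → ℝ) (a b : ℝ) : ℝ := ∫ x in a..b, √(1 + f' x ^ 2)

theorem intervalIntegrable_sqrt_one_add_sq (hab : a ≤ b) (hf' : ContinuousOn f' (Icc a b)) :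
    IntervalIntegrable (fun x => √(1 + f' x ^ 2)) volume a b :=
  ContinuousOn.intervalIntegrable_of_Icc hab (by fun_prop)

theorem graphLength_deriv_comp_le {g g' P : ℝ → ℝ} (hab : a ≤ b) (hP : LipschitzWith 1 P)
    (hg : HasContinuousDerivOn g g' (Icc a b)) :
    graphLength (deriv (P ∘ g)) a b ≤ graphLength g' a b := by
  have hint := (intervalIntegrable_iff_integrableOn_Ioo_of_le hab).1
    (intervalIntegrable_sqrt_one_add_sq hab hg.continuousOn_deriv)
  simp only [graphLength, integral_of_le hab, integral_Ioc_eq_integral_Ioo]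
  refine integral_mono_of_nonneg (.of_forall fun x => Real.sqrt_nonneg _) hint ?_
  filter_upwards [ae_restrict_mem measurableSet_Ioo] with x hx
  have hderiv : |deriv (P ∘ g) x| ≤ |g' x| := by
    simpa using norm_deriv_comp_le_of_lipschitzWith hP (hg.hasDerivAt_of_mem_Ioo hx)
  have := sq_le_sq.2 hderiv
  gcongr

theorem sqrt_one_add_mul_sq_le {s : ℝ} (hs : 0 ≤ s) (p : ℝ) :
    √(1 + (p * s) ^ 2) ≤ s * √(1 + p ^ 2) + max 0 (1 - s) := by
  set m := max 0 (1 - s)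
  have : 0 ≤ m := le_max_left _ _
  have hsm : 1 ≤ s + m := by linarith [le_max_right 0 (1 - s)]
  have hone : 1 ≤ √(1 + p ^ 2) := Real.one_le_sqrt.2 (by linarith [sq_nonneg p])
  refine Real.sqrt_le_iff.2 ⟨by positivity, ?_⟩
  calc 1 + (p * s) ^ 2 ≤ (s + m) ^ 2 + (p * s) ^ 2 := by gcongr; exact one_le_pow₀ hsm
    _ = s ^ 2 * (1 + p ^ 2) + 2 * (s * m) * 1 + m ^ 2 := by ring
    _ ≤ s ^ 2 * (1 + p ^ 2) + 2 * (s * m) * √(1 + p ^ 2) + m ^ 2 := by gcongr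
    _ = (s * √(1 + p ^ 2) + m) ^ 2 := by
      rw [← Real.sq_sqrt (by positivity : 0 ≤ 1 + p ^ 2), Real.sqrt_sq (Real.sqrt_nonneg _)]
      ring

theorem graphLength_rescale_le (hab : a ≤ b) (hcd : c < d) (hf' : ContinuousOn f' (Icc a b)) :
    graphLength (fun x => f' (rescale a b c d x) * ((b - a) / (d - c))) c d ≤
      graphLength f' a b + max 0 ((d - c) - (b - a)) := by
  have hcd' : 0 < d - c := sub_pos.2 hcd
  set s := (b - a) / (d - c) with hs
  have hs0 : 0 ≤ s := div_nonneg (sub_nonneg.2 hab) hcd'.le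
  have hcomp := continuousOn_comp_rescale hf' hab hcd
  have hint := intervalIntegrable_sqrt_one_add_sq hcd.le hcomp
  calc graphLength (fun x => f' (rescale a b c d x) * s) c d
      ≤ ∫ x in c..d, (s * √(1 + f' (rescale a b c d x) ^ 2) + max 0 (1 - s)) :=
        integral_mono_on hcd.le
          (intervalIntegrable_sqrt_one_add_sq hcd.le (hcomp.mul continuousOn_const))
          ((hint.const_mul s).add intervalIntegrable_const)
          fun x _ => sqrt_one_add_mul_sq_le hs0 _
    _ = s • (∫ x in c..d, √(1 + f' (rescale a b c d x) ^ 2)) + (d - c) * max 0 (1 - s) := by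
        rw [integral_add (hint.const_mul s) intervalIntegrable_const,
          intervalIntegral.integral_const_mul, intervalIntegral.integral_const, smul_eq_mul,
          smul_eq_mul]
    _ = graphLength f' a b + max 0 ((d - c) - (b - a)) := by
        rw [integral_comp_rescale (fun y => √(1 + f' y ^ 2)) a b hcd.ne, graphLength,
          mul_max_of_nonneg _ _ hcd'.le, mul_zero, mul_sub, mul_one, hs,
          mul_div_cancel₀ _ hcd'.ne']

end GraphLength

section Step

variable {γ a b c d : ℝ} {f f' g g' h h' P : ℝ → ℝ}

/-- The weak form of one semi-implicit step of the mean curvature motion on `[a, b]`, from the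
profile `f` to the profile `g`. The primed functions are the derivatives of the profiles, and
`γ` stands for `β / Δt`. -/
def IsSemiImplicitStep (γ a b : ℝ) (f f' g g' : ℝ → ℝ) : Prop :=
  ∀ (v : ℝ → ℝ) (K : NNReal), LipschitzOnWith K v (Icc a b) → v a = 0 → v b = 0 →
    (∫ x in a..b, (γ * ((g x - f x) * v x) / √(1 + g' x ^ 2) +
      (g' x + f' x) * deriv v x / (√(1 + g' x ^ 2) + √(1 + f' x ^ 2)))) = 0

theorem add_mul_sub_div_sqrt_one_add_sq (p q : ℝ) :
    (p + q) * (p - q) / (√(1 + p ^ 2) + √(1 + q ^ 2)) = √(1 + p ^ 2) - √(1 + q ^ 2) := by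
  have hp : √(1 + p ^ 2) ^ 2 = 1 + p ^ 2 := Real.sq_sqrt (by positivity)
  have hq : √(1 + q ^ 2) ^ 2 = 1 + q ^ 2 := Real.sq_sqrt (by positivity)
  rw [div_eq_iff (by positivity)]
  linear_combination hq - hp

theorem IsSemiImplicitStep.energy_eq (hstep : IsSemiImplicitStep γ a b f f' g g') (hab : a ≤ b)
    (hf : HasContinuousDerivOn f f' (Icc a b)) (hg : HasContinuousDerivOn g g' (Icc a b))
    (ha : g a = f a) (hb : g b = f b) :
    γ * (∫ x in a..b, (g x - f x) ^ 2 / √(1 + g' x ^ 2)) + graphLength g' a b =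
      graphLength f' a b := by
  obtain ⟨K, hK⟩ := (hg.sub hf).exists_lipschitzOnWith isCompact_Icc (convex_Icc a b)
  have htest := hstep (g - f) K hK (sub_eq_zero.2 ha) (sub_eq_zero.2 hb)
  have hintegrand : (∫ x in a..b, (γ * ((g x - f x) ^ 2 / √(1 + g' x ^ 2)) +
      (√(1 + g' x ^ 2) - √(1 + f' x ^ 2)))) = 0 := by
    rw [← htest]
    refine integral_congr_Ioo_of_le hab fun x hx => ?_
    rw [((hg.sub hf).hasDerivAt_of_mem_Ioo hx).deriv, ← add_mul_sub_div_sqrt_one_add_sq]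
    simp only [Pi.sub_apply]
    ring
  have hdiss : IntervalIntegrable (fun x => (g x - f x) ^ 2 / √(1 + g' x ^ 2)) volume a b := by
    have := hf.continuousOn
    have := hg.continuousOn
    have := hg.continuousOn_deriv
    refine ContinuousOn.intervalIntegrable_of_Icc hab (.div (by fun_prop) (by fun_prop) ?_)
    exact fun x _ => by positivity
  have hg_int := intervalIntegrable_sqrt_one_add_sq hab hg.continuousOn_deriv
  have hf_int := intervalIntegrable_sqrt_one_add_sq hab hf.continuousOn_deriv
  rw [integral_add (hdiss.const_mul γ) (hg_int.sub hf_int), integral_sub hg_int hf_int,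
    intervalIntegral.integral_const_mul] at hintegrand
  simp only [graphLength]
  linarith

theorem one_step_stability_general (hab : a ≤ b) (hcd : c < d)
    (hh : HasContinuousDerivOn h h' (Icc a b)) (hg : HasContinuousDerivOn g g' (Icc c d))
    (hgc : g c = h a) (hgd : g d = h b)
    (hstep : IsSemiImplicitStep γ c d (fun x => h (rescale a b c d x))
      (fun x => h' (rescale a b c d x) * ((b - a) / (d - c))) g g')
    (hP : LipschitzWith 1 P) :
    γ * (∫ x in c..d, (g x - h (rescale a b c d x)) ^ 2 / √(1 + g' x ^ 2)) +
        graphLength (deriv (P ∘ g)) c d ≤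
      graphLength h' a b + max 0 ((d - c) - (b - a)) := by
  have henergy := hstep.energy_eq hcd.le (hh.comp_rescale hab hcd) hg
    (by rw [rescale_left, hgc]) (by rw [rescale_right a b hcd.ne, hgd])
  have hproj := graphLength_deriv_comp_le hcd.le hP hg
  have hrescale := graphLength_rescale_le hab hcd hh.continuousOn_deriv
  linarith

end Step

theorem contact_interval_growth_le {Δt σ : ℝ} (hΔt : 0 ≤ Δt) (hσ : -1 ≤ σ) (a b p q : ℝ) :
    (b - Δt * (σ + 1 / √(1 + q ^ 2))) - (a + Δt * (σ + 1 / √(1 + p ^ 2))) - (b - a) ≤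
      2 * Δt := by
  have hleft : Δt * -1 ≤ Δt * (σ + 1 / √(1 + p ^ 2)) := by
    gcongr; exact le_add_of_le_of_nonneg hσ (by positivity)
  have hright : Δt * -1 ≤ Δt * (σ + 1 / √(1 + q ^ 2)) := by
    gcongr; exact le_add_of_le_of_nonneg hσ (by positivity)
  linarith

/-- One-step stability estimate for the projection scheme for droplet dynamics:
explicit boundary update, rescaling of the previous profile, semi-implicit
weak-form update of the capillary surface, and projection `hⁿ⁺¹ = max{h̃ⁿ⁺¹, 0}`
enforcing the obstacle condition. -/
theorem one_step_stability (β Δt σ : ℝ) (hβ : 0 < β) (hΔt : 0 < Δt) (hσ : |σ| ≤ 1)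
    (an bn : ℝ) (hab : an < bn)
    (hn hn' : ℝ → ℝ)
    (hdn : ∀ x ∈ Set.Icc an bn, HasDerivWithinAt hn (hn' x) (Set.Icc an bn) x)
    (hcn : ContinuousOn hn' (Set.Icc an bn))
    (hna : hn an = 0) (hnb : hn bn = 0)
    (pn qn an1 bn1 : ℝ)
    (han1 : an1 = an + Δt * (σ + 1 / Real.sqrt (1 + pn ^ 2)))
    (hbn1 : bn1 = bn - Δt * (σ + 1 / Real.sqrt (1 + qn ^ 2)))
    (hab1 : an1 < bn1)
    (hstar hstar' : ℝ → ℝ)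
    (hstardef : ∀ x, hstar x = hn (an + (bn - an) * (x - an1) / (bn1 - an1)))
    (hstar'def : ∀ x, hstar' x =
      hn' (an + (bn - an) * (x - an1) / (bn1 - an1)) * ((bn - an) / (bn1 - an1)))
    (htil htil' : ℝ → ℝ)
    (hdt : ∀ x ∈ Set.Icc an1 bn1, HasDerivWithinAt htil (htil' x) (Set.Icc an1 bn1) x)
    (hct : ContinuousOn htil' (Set.Icc an1 bn1))
    (hta : htil an1 = 0) (htb : htil bn1 = 0)
    (hweak : ∀ (v : ℝ → ℝ) (K : NNReal), LipschitzOnWith K v (Set.Icc an1 bn1) →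
      v an1 = 0 → v bn1 = 0 →
      (∫ x in an1..bn1,
        (β / Δt * ((htil x - hstar x) * v x) / Real.sqrt (1 + htil' x ^ 2) +
          (htil' x + hstar' x) * deriv v x /
            (Real.sqrt (1 + htil' x ^ 2) + Real.sqrt (1 + hstar' x ^ 2)))) = 0) :
    β / Δt * (∫ x in an1..bn1, (htil x - hstar x) ^ 2 / Real.sqrt (1 + htil' x ^ 2)) +
      (∫ x in an1..bn1, Real.sqrt (1 + deriv (fun y => max (htil y) 0) x ^ 2)) ≤
      (∫ x in an..bn, Real.sqrt (1 + hn' x ^ 2)) + 4 * Δt := by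
  obtain rfl := funext hstardef
  obtain rfl := funext hstar'def
  have hgrowth := contact_interval_growth_le hΔt.le (abs_le.1 hσ).1 an bn pn qn
  exact (one_step_stability_general hab.le hab1 ⟨hdn, hcn⟩ ⟨hdt, hct⟩ (hta.trans hna.symm)
    (htb.trans hnb.symm) hweak (LipschitzWith.id.max_const 0)).trans
    (add_le_add le_rfl (max_le (by positivity) (by linarith)))
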